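/- There exists a family 𝒯 ⊆ 𝓛 with |𝒯| = 2^c such that for each τ ∈ 𝒯 the space (ℝ, τ) is a completely normal space of first category, and for distinct τ, τ' ∈ 𝒯 the spaces (ℝ, τ) and (ℝ, τ') are not homeomorphic. -/

import Mathlib

/-!
The argument has two independent halves.

**Rigidity.** If `τ, τ' ∈ 𝓛` and `h : (ℝ, τ') → (ℝ, τ)` is a homeomorphism, then `h` is continuous
from the Euclidean line into the Hausdorff space `(ℝ, τ)`, so `h` is determined by `h|ℚ`; and `τ'`
is the topology induced by `h` from `τ`. Hence at most `|ℝ^ℚ| = 𝔠` members of `𝓛` are homeomorphic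
to a given one (`mk_homeomorphic_le`). A family of `2^𝔠` distinct members of `𝓛` therefore meets
`2^𝔠` homeomorphism classes, and one representative of each class suffices.

**Many topologies.** There is a family of continuous functions `f p : ℝ → ℝ`, `p ∈ ℝ`, with
`f p x = x` for `x ≤ |p|`, and such that any finitely many of them simultaneously approximate
arbitrary prescribed values at arbitrarily large arguments (`exists_independent_family`). Such a
family comes from a sequence that is dense in `C(ℝ, ℝ)`, in the spirit of the
Hewitt–Marczewski–Pondiczery theorem. For `S ⊆ ℝ` let `initTop f S` be the initial topology of
`f p`, `p ∈ S`.
* It is regular and coarser than the Euclidean topology, hence hereditarily Lindelöf, hence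
  completely normal; it is Hausdorff once `S` is unbounded.
* Nonempty open sets are unbounded, so each compact set `[-n, n]` is nowhere dense and the space is
  of first category.
* By independence `f q` is not continuous for `initTop f S` if `q ∉ S`, so `S ↦ initTop f S` is
  injective. The sets `S` with `[0, ∞) ⊆ S` provide `2^𝔠` topologies.
-/

open Topology Set

noncomputable section

/-- The Euclidean topology on `ℝ`. -/
def eta : TopologicalSpace ℝ := inferInstance

/-- `Coarser τ₁ τ₂` means every `τ₁`-open set is `τ₂`-open, i.e. `τ₁ ⊆ τ₂`
as families of open sets. -/
def Coarser (τ₁ τ₂ : TopologicalSpace ℝ) : Prop :=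
  ∀ U : Set ℝ, IsOpen[τ₁] U → IsOpen[τ₂] U

/-- The family `𝓛`: Hausdorff topologies on `ℝ` coarser than the Euclidean one. -/
def InL (τ : TopologicalSpace ℝ) : Prop :=
  Coarser τ eta ∧ @T2Space ℝ τ

/-- `τ` is coarse at `a`: the `τ`-neighborhood filter of `a` differs from the
Euclidean one. -/
def CoarseAt (τ : TopologicalSpace ℝ) (a : ℝ) : Prop :=
  @nhds ℝ τ a ≠ @nhds ℝ eta a

/-- `C(τ)`: the set of points at which `τ` is coarse. -/
def Cset (τ : TopologicalSpace ℝ) : Set ℝ := {a | CoarseAt τ a}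

/-- The family `𝓛₀`: topologies in `𝓛` with `C(τ) ⊆ {0}`. -/
def InL0 (τ : TopologicalSpace ℝ) : Prop := InL τ ∧ Cset τ ⊆ {0}

/-- `(ℝ, τ)` is completely metrizable. -/
def CompletelyMetrizable (τ : TopologicalSpace ℝ) : Prop :=
  ∃ m : MetricSpace ℝ,
    m.toUniformSpace.toTopologicalSpace = τ ∧ @CompleteSpace ℝ m.toUniformSpace

end

/-! ### The independent family of functions -/

/-- `f` is a family of continuous functions, each the identity on `(-∞, |p|]`, any finitely many of
which simultaneously come close to any prescribed values at arbitrarily large arguments. -/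
structure IsIndependentFamily (f : ℝ → ℝ → ℝ) : Prop where
  continuous : ∀ p, Continuous (f p)
  eq_self : ∀ p x, x ≤ |p| → f p x = x
  approx : ∀ (F : Finset ℝ) (v : ℝ → ℝ) (ε : ℝ), 0 < ε → ∀ R : ℝ,
    ∃ y > R, ∀ p ∈ F, |f p y - v p| < ε

/-- A dense sequence of `C(ℝ, ℝ)` approximates any finite set of prescribed values, because such
values are interpolated by a polynomial. -/
lemma exists_denseSeq_near (F : Finset ℝ) (v : ℝ → ℝ) {ε : ℝ} (hε : 0 < ε) :
    ∃ m, ∀ p ∈ F, |TopologicalSpace.denseSeq C(ℝ, ℝ) m p - v p| < ε := by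
  have hopen : IsOpen {g : C(ℝ, ℝ) | ∀ p ∈ F, |g p - v p| < ε} := by
    have : {g : C(ℝ, ℝ) | ∀ p ∈ F, |g p - v p| < ε}
        = ⋂ p ∈ F, {g : C(ℝ, ℝ) | |g p - v p| < ε} := by ext; simp
    rw [this]
    refine isOpen_biInter_finset fun p _ => isOpen_lt ?_ continuous_const
    have : Continuous fun g : C(ℝ, ℝ) => g p := ContinuousEvalConst.continuous_eval_const p
    fun_prop
  have hne : {g : C(ℝ, ℝ) | ∀ p ∈ F, |g p - v p| < ε}.Nonempty := by
    refine ⟨(Lagrange.interpolate F id v).toContinuousMap, fun p hp => ?_⟩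
    have h := Lagrange.eval_interpolate_at_node (s := F) (v := (id : ℝ → ℝ)) v
      (injOn_id _) hp
    simp only [id] at h
    rw [Polynomial.toContinuousMap_apply, h]
    simpa using hε
  obtain ⟨m, hm⟩ := (TopologicalSpace.denseRange_denseSeq C(ℝ, ℝ)).exists_mem_open hopen hne
  exact ⟨m, hm⟩

lemma exists_independent_family : ∃ f : ℝ → ℝ → ℝ, IsIndependentFamily f := by
  -- Decoding `n` with `Nat.unpair` repeats each term of the dense sequence infinitely often.
  have hg : ∀ p : ℝ, ∃ g : C(ℝ, ℝ), ∀ n : ℕ,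
      g n = TopologicalSpace.denseSeq C(ℝ, ℝ) (Nat.unpair n).1 p := by
    intro p
    obtain ⟨g, hg⟩ := ContinuousMap.exists_extension' (Y := ℝ) Nat.isClosedEmbedding_coe_real
      ⟨fun n : ℕ => TopologicalSpace.denseSeq C(ℝ, ℝ) (Nat.unpair n).1 p,
        continuous_of_discreteTopology⟩
    exact ⟨g, fun n => congrFun hg n⟩
  choose g hg using hg
  -- The weight `φ p` moves from `0` to `1` on `[|p|, |p| + 1]`.
  let φ : ℝ → ℝ → ℝ := fun p x => max 0 (min 1 (x - |p|))
  refine ⟨fun p x => (1 - φ p x) * x + φ p x * g p x, ⟨fun p => ?_, fun p x hx => ?_, ?_⟩⟩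
  · simp only [φ]; fun_prop
  · have : φ p x = 0 := max_eq_left ((min_le_right _ _).trans (by linarith))
    simp [this]
  · intro F v ε hε R
    obtain ⟨m, hm⟩ := exists_denseSeq_near F v hε
    obtain ⟨N, hN⟩ := exists_nat_gt (|R| + ∑ p ∈ F, |p| + 1)
    have hsum : 0 ≤ ∑ p ∈ F, |p| := Finset.sum_nonneg fun _ _ => abs_nonneg _
    have hle : (N : ℝ) ≤ (Nat.pair m N : ℕ) := by exact_mod_cast Nat.right_le_pair m N
    refine ⟨(Nat.pair m N : ℕ), by linarith [le_abs_self R], fun p hp => ?_⟩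
    have hpF : |p| ≤ ∑ p ∈ F, |p| :=
      Finset.single_le_sum (f := fun p : ℝ => |p|) (fun _ _ => abs_nonneg _) hp
    have h1 : φ p (Nat.pair m N : ℕ) = 1 := by
      simp only [φ]
      rw [min_eq_left (by linarith [abs_nonneg R])]
      exact max_eq_right zero_le_one
    simpa [h1, hg] using hm p hp

/-! ### The initial topologies -/

/-- The initial topology on `ℝ` of the functions `f p`, `p ∈ S`. -/
abbrev initTop (f : ℝ → ℝ → ℝ) (S : Set ℝ) : TopologicalSpace ℝ :=
  TopologicalSpace.induced (fun x (p : S) => f p x) Pi.topologicalSpace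

lemma continuous_initTop (f : ℝ → ℝ → ℝ) (S : Set ℝ) {p : ℝ} (hp : p ∈ S) :
    @Continuous ℝ ℝ (initTop f S) _ (f p) := by
  have h : @Continuous ℝ (S → ℝ) (initTop f S) _ fun x (p : S) => f p x := continuous_induced_dom
  exact @Continuous.comp ℝ (S → ℝ) ℝ (initTop f S) _ _ _ _ (continuous_apply (⟨p, hp⟩ : S)) h

lemma exists_basic_subset {f : ℝ → ℝ → ℝ} {S U : Set ℝ} (hU : IsOpen[initTop f S] U) {x : ℝ}
    (hx : x ∈ U) : ∃ F : Finset ℝ, (F : Set ℝ) ⊆ S ∧ ∃ ε > 0, ∀ y,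
      (∀ p ∈ F, |f p y - f p x| < ε) → y ∈ U := by
  classical
  obtain ⟨V, hV, rfl⟩ := isOpen_induced_iff.1 hU
  obtain ⟨I, u, hu, hsub⟩ := isOpen_pi_iff.1 hV _ hx
  have hball : ∀ p : S, ∃ ε > 0, p ∈ I → Metric.ball (f p x) ε ⊆ u p := by
    intro p
    by_cases hp : p ∈ I
    · obtain ⟨ε, hε, h⟩ := Metric.isOpen_iff.1 (hu p hp).1 _ (hu p hp).2
      exact ⟨ε, hε, fun _ => h⟩
    · exact ⟨1, one_pos, fun h => absurd h hp⟩
  choose e he hball using hball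
  obtain ⟨ε, hε, hεle⟩ : ∃ ε > 0, ∀ p ∈ I, ε ≤ e p := by
    clear hsub hu
    induction I using Finset.induction_on with
    | empty => exact ⟨1, one_pos, by simp⟩
    | insert a s _ ih =>
      obtain ⟨ε, hε, h⟩ := ih fun p hp => hball p (Finset.mem_insert_of_mem hp)
      refine ⟨min ε (e a), lt_min hε (he a), fun p hp => ?_⟩
      rcases Finset.mem_insert.1 hp with rfl | hp
      · exact min_le_right _ _
      · exact (min_le_left _ _).trans (h p hp)
  refine ⟨I.image Subtype.val, by intro p; simp +contextual, ε, hε, fun y hy => hsub ?_⟩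
  intro p hp
  refine hball p hp ?_
  rw [Metric.mem_ball, Real.dist_eq]
  exact (hy p (Finset.mem_image_of_mem _ hp)).trans_le (hεle p hp)

/-- The topologies `initTop f S` determine `S`: a function `f q` with `q ∈ S \ S'` is continuous
for `initTop f S` but not for `initTop f S'`. -/
lemma IsIndependentFamily.injective {f : ℝ → ℝ → ℝ} (hf : IsIndependentFamily f) :
    Function.Injective (initTop f) := by
  classical
  have key : ∀ S S' : Set ℝ, initTop f S = initTop f S' → S ⊆ S' := by
    intro S S' h q hq
    by_contra hq'
    have hcont := continuous_initTop f S hq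
    rw [h] at hcont
    have hopen : IsOpen[initTop f S'] (f q ⁻¹' Metric.ball (f q 0) 1) :=
      @Continuous.isOpen_preimage ℝ ℝ (initTop f S') _ _ hcont _ Metric.isOpen_ball
    obtain ⟨F, hFS, ε, hε, hF⟩ := exists_basic_subset hopen (x := 0) (by simp)
    obtain ⟨y, -, hy⟩ := hf.approx (insert q F)
      (fun p => if p = q then f q 0 + 2 else f p 0) (min ε 1) (lt_min hε one_pos) 0
    have h1 : y ∈ f q ⁻¹' Metric.ball (f q 0) 1 := by
      refine hF y fun p hp => ?_
      have hpq : p ≠ q := fun e => hq' (e ▸ hFS hp)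
      have := hy p (Finset.mem_insert_of_mem hp)
      rw [if_neg hpq] at this
      exact this.trans_le (min_le_left _ _)
    have h2 := (hy q (Finset.mem_insert_self _ _)).trans_le (min_le_right _ _)
    rw [if_pos rfl] at h2
    rw [mem_preimage, Metric.mem_ball, Real.dist_eq] at h1
    rw [abs_lt] at h1 h2
    linarith [h1.2, h2.1]
  exact fun S S' h => (key S S' h).antisymm (key S' S h.symm)

lemma IsIndependentFamily.coarser {f : ℝ → ℝ → ℝ} (hf : IsIndependentFamily f) (S : Set ℝ) :
    Coarser (initTop f S) eta := by
  have h : Continuous fun x (p : S) => f p x := continuous_pi fun p => hf.continuous p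
  exact continuous_iff_le_induced.1 h

lemma IsIndependentFamily.inL {f : ℝ → ℝ → ℝ} (hf : IsIndependentFamily f) {S : Set ℝ}
    (hS : Ici 0 ⊆ S) : InL (initTop f S) := by
  refine ⟨hf.coarser S, ?_⟩
  have hcont : @Continuous ℝ (S → ℝ) (initTop f S) _ fun x (p : S) => f p x :=
    continuous_induced_dom
  refine @T2Space.of_injective_continuous ℝ (S → ℝ) (initTop f S) _ _ _ (fun x y hxy => ?_) hcont
  -- The function with index `max |x| |y|` fixes both points.
  have hp : max |x| |y| ∈ S := hS ((abs_nonneg x).trans (le_max_left _ _))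
  have h := congrFun hxy ⟨_, hp⟩
  have habs : abs (max |x| |y|) = max |x| |y| :=
    abs_of_nonneg ((abs_nonneg x).trans (le_max_left _ _))
  simp only at h
  rwa [hf.eq_self _ x (by rw [habs]; exact (le_abs_self x).trans (le_max_left _ _)),
    hf.eq_self _ y (by rw [habs]; exact (le_abs_self y).trans (le_max_right _ _))] at h

lemma isLindelof_eta (s : Set ℝ) : @IsLindelof ℝ eta s :=
  HereditarilyLindelofSpace.isLindelof (X := ℝ) s

lemma Coarser.continuous_id {τ : TopologicalSpace ℝ} (h : Coarser τ eta) :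
    @Continuous ℝ ℝ eta τ id :=
  (@continuous_def ℝ ℝ eta τ id).2 fun s hs => h s hs

/-- A regular topology coarser than the Euclidean one is hereditarily Lindelöf, hence completely
normal. -/
lemma Coarser.completelyNormalSpace {τ : TopologicalSpace ℝ} (h : Coarser τ eta)
    (hr : @RegularSpace ℝ τ) : @CompletelyNormalSpace ℝ τ := by
  have hL : ∀ s : Set ℝ, @IsLindelof ℝ τ s := fun s => by
    have := @IsLindelof.image ℝ ℝ eta τ s id
      (isLindelof_eta s) h.continuous_id
    simpa using this
  let _ := τ
  refine CompletelyNormalSpace.of_forall_normalSpace fun s => ?_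
  have : LindelofSpace s := isLindelof_iff_lindelofSpace.1 (hL s)
  infer_instance

lemma IsIndependentFamily.isMeagre {f : ℝ → ℝ → ℝ} (hf : IsIndependentFamily f) {S : Set ℝ}
    (hS : Ici 0 ⊆ S) : @IsMeagre ℝ (initTop f S) univ := by
  have hIcc : ∀ n : ℕ, IsCompact (Icc (-n : ℝ) n) := fun n => isCompact_Icc
  have hcpt : ∀ n : ℕ, @IsCompact ℝ (initTop f S) (Icc (-n : ℝ) n) := fun n => by
    have := @IsCompact.image ℝ ℝ eta (initTop f S) (Icc (-n : ℝ) n) id (hIcc n)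
      (hf.coarser S).continuous_id
    simpa using this
  have hunb : ∀ U : Set ℝ, IsOpen[initTop f S] U → ∀ x ∈ U, ∀ R : ℝ, ∃ y ∈ U, R < y := by
    intro U hU x hx R
    obtain ⟨F, -, ε, hε, hF⟩ := exists_basic_subset hU hx
    obtain ⟨y, hy, h⟩ := hf.approx F (fun p => f p x) ε hε R
    exact ⟨y, hF y h, hy⟩
  let _ := initTop f S
  have : T2Space ℝ := (hf.inL hS).2
  have hcover : (univ : Set ℝ) = ⋃ n : ℕ, Icc (-n : ℝ) n := by
    refine (eq_univ_of_forall fun x => ?_).symm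
    obtain ⟨n, hn⟩ := exists_nat_ge |x|
    exact mem_iUnion.2 ⟨n, abs_le.1 hn⟩
  rw [hcover]
  refine isMeagre_iUnion fun n => IsNowhereDense.isMeagre ?_
  rw [(hcpt n).isClosed.isNowhereDense_iff, eq_empty_iff_forall_notMem]
  intro x hx
  obtain ⟨y, hy, hny⟩ := hunb _ isOpen_interior x hx n
  exact absurd (interior_subset hy).2 (not_le.2 hny)

/-! ### Counting homeomorphism classes -/

lemma denseRange_ratCast_eta : @DenseRange ℝ eta ℚ (fun q => (q : ℝ)) :=
  Rat.denseRange_cast (𝕜 := ℝ)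

/-- At most `𝔠` members of `𝓛` are homeomorphic to a given one. -/
lemma mk_homeomorphic_le {τ : TopologicalSpace ℝ} (hτ : InL τ) :
    Cardinal.mk {τ' : TopologicalSpace ℝ // InL τ' ∧ Nonempty (@Homeomorph ℝ ℝ τ' τ)}
      ≤ Cardinal.continuum := by
  let h : ∀ t : {τ' : TopologicalSpace ℝ // InL τ' ∧ Nonempty (@Homeomorph ℝ ℝ τ' τ)},
    @Homeomorph ℝ ℝ t.1 τ := fun t => t.2.2.some
  let e := fun t => @Homeomorph.toEquiv ℝ ℝ t.1 τ (h t)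
  have hinj : Function.Injective fun t (q : ℚ) => e t (q : ℝ) := by
    intro t t' htt
    have hc : ∀ t, @Continuous ℝ ℝ eta τ (e t) := fun t =>
      (@continuous_def ℝ ℝ eta τ _).2 fun s hs => t.2.1.1 _
        ((@continuous_def ℝ ℝ t.1 τ _).1 (@Homeomorph.continuous_toFun ℝ ℝ t.1 τ (h t)) s hs)
    have hfun : ⇑(e t) = e t' :=
      @DenseRange.equalizer ℚ ℝ ℝ eta τ hτ.2 _ denseRange_ratCast_eta _ _ (hc t) (hc t') htt
    have hind : ∀ t, t.1 = TopologicalSpace.induced (e t) τ := fun t =>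
      @IsInducing.eq_induced ℝ ℝ t.1 τ _ (@Homeomorph.isInducing ℝ ℝ t.1 τ (h t))
    refine Subtype.ext ?_
    rw [hind t, hind t', hfun]
  refine (Cardinal.mk_le_of_injective hinj).trans ?_
  simp [Cardinal.mk_real]

/-- Homeomorphism of topologies on `ℝ`, restricted to a set of topologies. -/
def homeoSetoid (A : Set (TopologicalSpace ℝ)) : Setoid A where
  r t t' := Nonempty (@Homeomorph ℝ ℝ t.1 t'.1)
  iseqv :=
    { refl := fun t => ⟨@Homeomorph.refl ℝ t.1⟩
      symm := fun {t t'} ⟨h⟩ => ⟨@Homeomorph.symm ℝ ℝ t.1 t'.1 h⟩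
      trans := fun {t t' t''} ⟨h⟩ ⟨h'⟩ => ⟨@Homeomorph.trans ℝ ℝ ℝ t.1 t'.1 t''.1 h h'⟩ }

/-- A family of `2^𝔠` members of `𝓛` contains `2^𝔠` pairwise non-homeomorphic ones. -/
lemma exists_nonhomeomorphic_subfamily (A : Set (TopologicalSpace ℝ)) (hA : ∀ τ ∈ A, InL τ)
    (hcard : Cardinal.mk A = 2 ^ Cardinal.continuum) :
    ∃ B ⊆ A, Cardinal.mk B = 2 ^ Cardinal.continuum ∧
      ∀ τ ∈ B, ∀ τ' ∈ B, τ ≠ τ' → IsEmpty (@Homeomorph ℝ ℝ τ τ') := by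
  let _ := homeoSetoid A
  let rep : Quotient (homeoSetoid A) → TopologicalSpace ℝ := fun c => c.out.1
  have hrep : Function.Injective rep := fun c c' h => by
    rw [← c.out_eq, ← c'.out_eq, Subtype.ext (a1 := c.out) (a2 := c'.out) h]
  refine ⟨range rep, ?_, ?_, ?_⟩
  · rintro _ ⟨c, rfl⟩
    exact c.out.2
  · rw [Cardinal.mk_range_eq _ hrep]
    refine le_antisymm (hcard ▸ Cardinal.mk_quotient_le) (le_of_not_gt fun hlt => ?_)
    have hfib : ∀ c : Quotient (homeoSetoid A),
        Cardinal.mk {t : A // (Quotient.mk _ t : Quotient (homeoSetoid A)) = c}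
          ≤ Cardinal.continuum := by
      intro c
      refine le_trans ?_ (mk_homeomorphic_le (hA _ c.out.2))
      refine Cardinal.mk_le_of_injective (f := fun t => ⟨t.1.1, hA _ t.1.2, ?_⟩) ?_
      · exact Quotient.exact (t.2.trans c.out_eq.symm)
      · intro t t' h
        exact Subtype.ext (Subtype.ext (by simpa using congrArg Subtype.val h))
    have hle : Cardinal.mk A ≤ Cardinal.mk (Quotient (homeoSetoid A)) * Cardinal.continuum := by
      rw [← Cardinal.mk_congr
        (Equiv.sigmaFiberEquiv (fun t : A => (Quotient.mk _ t : Quotient (homeoSetoid A)))),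
        Cardinal.mk_sigma]
      refine (Cardinal.sum_le_sum _ (fun _ => Cardinal.continuum) hfib).trans ?_
      simp
    rw [hcard] at hle
    have hc : Cardinal.continuum < 2 ^ Cardinal.continuum := Cardinal.cantor _
    exact absurd hle (not_le.2
      (Cardinal.mul_lt_of_lt (Cardinal.aleph0_le_continuum.trans hc.le) hlt hc))
  · rintro _ ⟨c, rfl⟩ _ ⟨c', rfl⟩ hne
    refine ⟨fun h => hne ?_⟩
    have : c.out ≈ c'.out := ⟨h⟩
    rw [Quotient.out_equiv_out.1 this]

/-- There are 2^𝔠 mutually non-homeomorphic τ ∈ 𝓛 such that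
(ℝ, τ) is a completely normal space of first category. -/
theorem statement_10 :
    ∃ 𝒯 : Set (TopologicalSpace ℝ),
      Cardinal.mk ↥𝒯 = 2 ^ Cardinal.continuum ∧
      (∀ τ ∈ 𝒯, InL τ ∧ @CompletelyNormalSpace ℝ τ ∧ @IsMeagre ℝ τ Set.univ) ∧
      ∀ τ ∈ 𝒯, ∀ τ' ∈ 𝒯, τ ≠ τ' → IsEmpty (@Homeomorph ℝ ℝ τ τ') := by
  obtain ⟨f, hf⟩ := exists_independent_family
  -- The index sets are `[0, ∞) ∪ A` with `A` an arbitrary set of negative reals.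
  let T : Set (Iio (0 : ℝ)) → TopologicalSpace ℝ :=
    fun A => initTop f (Ici 0 ∪ Subtype.val '' A)
  have hT : Function.Injective T := by
    intro A A' h
    have hu := hf.injective h
    have hpre : ∀ A : Set (Iio (0 : ℝ)),
        (Subtype.val : Iio (0 : ℝ) → ℝ) ⁻¹' (Ici 0 ∪ Subtype.val '' A) = A := by
      intro A
      ext x
      have : ¬ (0 : ℝ) ≤ x := not_le.2 x.2
      simp [this]
    rw [← hpre A, hu, hpre A']
  have hprop : ∀ τ ∈ range T, InL τ ∧ @CompletelyNormalSpace ℝ τ ∧ @IsMeagre ℝ τ Set.univ := by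
    rintro _ ⟨A, rfl⟩
    refine ⟨hf.inL subset_union_left, (hf.coarser _).completelyNormalSpace ?_,
      hf.isMeagre subset_union_left⟩
    exact @IsInducing.regularSpace (↥(Ici (0 : ℝ) ∪ Subtype.val '' A) → ℝ) ℝ _ _ (T A) _
      (@IsInducing.mk ℝ _ (T A) _ _ rfl)
  have hcard : Cardinal.mk (range T) = 2 ^ Cardinal.continuum := by
    rw [Cardinal.mk_range_eq _ hT, Cardinal.mk_set, Cardinal.mk_Iio_real]
  obtain ⟨B, hBA, hB, hne⟩ :=
    exists_nonhomeomorphic_subfamily (range T) (fun τ h => (hprop τ h).1) hcard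
  exact ⟨B, hB, fun τ h => hprop τ (hBA h), hne⟩
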